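/- Let 𝒞 be an abelian category and let 𝒜 be a preresolving full additive subcategory with resdim_𝒜(𝒞) = n finite. Then for every acyclic (unbounded) cochain complex E• with all terms in 𝒜, there exists a contractible (null-homotopic) cochain complex C• with all terms in 𝒜 such that the image of every differential of the direct sum complex C• ⊕ E• lies in 𝒜. In particular, E• is homotopy equivalent to an acyclic complex with terms in 𝒜 all of whose images of differentials lie in 𝒜. -/

import Mathlib

open CategoryTheory CategoryTheory.Limits ZeroObject

universe v u

variable {C : Type u} [Category.{v} C] [Abelian C]

/-- A full additive subcategory of `C`, given as a predicate on objects: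
closed under isomorphisms, containing the zero object, closed under binary biproducts. -/
structure IsAdditiveClosed (𝒜 : C → Prop) : Prop where
  iso : ∀ {X Y : C}, (X ≅ Y) → 𝒜 X → 𝒜 Y
  zero : 𝒜 0
  biprod : ∀ {X Y : C}, 𝒜 X → 𝒜 Y → 𝒜 (X ⊞ Y)

/-- `𝒜` is deflation-closed: for every short exact sequence `0 → X → Y → Z → 0`
with `Y, Z ∈ 𝒜`, also `X ∈ 𝒜`. -/
def DeflationClosed (𝒜 : C → Prop) : Prop :=
  ∀ (S : ShortComplex C), S.ShortExact → 𝒜 S.X₂ → 𝒜 S.X₃ → 𝒜 S.X₁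

/-- Axiom (PR2): every object of `C` admits an epimorphism from an object of `𝒜`. -/
def PR2 (𝒜 : C → Prop) : Prop :=
  ∀ E : C, ∃ (A : C) (f : A ⟶ E), 𝒜 A ∧ Epi f

/-- `E` admits an exact sequence `0 → A⁻ⁿ → ⋯ → A⁰ → E → 0` with all `Aⁱ ∈ 𝒜`,
encoded as an everywhere-exact cochain complex with `E` placed in degree `1`. -/
def IsResolutionOfLength (𝒜 : C → Prop) (E : C) (n : ℕ) : Prop :=
  ∃ (R : CochainComplex C ℤ) (_ : R.X 1 ≅ E),
    (∀ k : ℤ, 1 < k → IsZero (R.X k)) ∧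
    (∀ k : ℤ, k < -(n : ℤ) → IsZero (R.X k)) ∧
    (∀ k : ℤ, -(n : ℤ) ≤ k → k ≤ 0 → 𝒜 (R.X k)) ∧
    (∀ k : ℤ, R.ExactAt k)

/-- The resolution dimension `resdim_𝒜 (E)`: the smallest `n` such that `E` admits an
`𝒜`-resolution of length `n`, and `∞` if no such `n` exists. -/
noncomputable def resdim (𝒜 : C → Prop) (E : C) : ℕ∞ :=
  sInf {m : ℕ∞ | ∃ n : ℕ, m = (n : ℕ∞) ∧ IsResolutionOfLength 𝒜 E n}

/-- `resdim_𝒜 (C)`: the supremum of `resdim_𝒜 (E)` over all objects `E`. -/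
noncomputable def resdimCat (𝒜 : C → Prop) : ℕ∞ :=
  ⨆ E : C, resdim 𝒜 E

/-- Inductive version of having an `𝒜`-resolution of length at most `r`. -/
def LenRes (𝒜 : C → Prop) : ℕ → C → Prop
  | 0, X => 𝒜 X
  | r + 1, X => ∃ (B : C) (b : B ⟶ X), Epi b ∧ 𝒜 B ∧ LenRes 𝒜 r (kernel b)

theorem LenRes.iso {𝒜 : C → Prop} (hadd : IsAdditiveClosed 𝒜) (r : ℕ) {X Y : C} (e : X ≅ Y)
    (h : LenRes 𝒜 r X) : LenRes 𝒜 r Y := by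
  induction r generalizing X Y with
  | zero => exact hadd.iso e h
  | succ r ih =>
    obtain ⟨B, b, hb, hB, hk⟩ := h
    exact ⟨B, b ≫ e.hom, inferInstance, hB, ih (kernelCompMono b e.hom).symm hk⟩

theorem mem_of_isKernel {𝒜 : C → Prop} (hdef : DeflationClosed 𝒜) {X Y Z : C}
    (i : X ⟶ Y) (p : Y ⟶ Z) (w : i ≫ p = 0) (hi : IsLimit (KernelFork.ofι i w)) [Epi p]
    (hY : 𝒜 Y) (hZ : 𝒜 Z) : 𝒜 X := by
  have : Mono i := Fork.IsLimit.mono hi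
  exact hdef (ShortComplex.mk i p w)
    { exact := ShortComplex.exact_of_f_is_kernel _ hi
      mono_f := this
      epi_g := inferInstance } hY hZ

theorem LenRes.pullback₀ {𝒜 : C → Prop} (hadd : IsAdditiveClosed 𝒜) (hdef : DeflationClosed 𝒜)
    {Q W P : C} (u : Q ⟶ P) (t : W ⟶ P) [Epi u] (hQ : 𝒜 Q) (hP : 𝒜 P)
    (hW : 𝒜 W) : 𝒜 (pullback u t) := by
  have : Epi (biprod.desc u (-t)) := by
    have h : Epi (biprod.inl ≫ biprod.desc u (-t)) := by
      rw [biprod.inl_desc]; infer_instance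
    exact epi_of_epi biprod.inl _
  exact mem_of_isKernel hdef _ _ _
    (Abelian.PullbackToBiproductIsKernel.isLimitPullbackToBiproduct u t)
    (hadd.biprod hQ hW) hP

theorem LenRes.pullback {𝒜 : C → Prop} (hadd : IsAdditiveClosed 𝒜) (hdef : DeflationClosed 𝒜)
    (r : ℕ) {Q W P : C} (u : Q ⟶ P) (t : W ⟶ P) [Epi u] (hQ : 𝒜 Q) (hP : 𝒜 P)
    (hW : LenRes 𝒜 r W) : LenRes 𝒜 r (pullback u t) := by
  cases r with
  | zero => exact LenRes.pullback₀ hadd hdef u t hQ hP hW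
  | succ r =>
    obtain ⟨B, b, hb, hB, hk⟩ := hW
    refine ⟨Limits.pullback (pullback.snd u t) b, pullback.fst _ _, inferInstance, ?_, ?_⟩
    · exact hadd.iso (pullbackLeftPullbackSndIso u t b).symm
        (LenRes.pullback₀ hadd hdef u (b ≫ t) hQ hP hB)
    · have := isIso_kernel_map_of_isPullback
        (IsPullback.of_hasPullback (pullback.snd u t) b)
      exact LenRes.iso hadd r (asIso (kernel.map _ _ _ _
        (IsPullback.of_hasPullback (pullback.snd u t) b).w)).symm hk

theorem nonempty_pullback_iso_kernel {K P X Q : C} (j : K ⟶ P) (f : P ⟶ X) (w : j ≫ f = 0)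
    (hj : IsLimit (KernelFork.ofι j w)) (q : Q ⟶ P) :
    Nonempty (pullback q j ≅ kernel (q ≫ f)) := by
  have : Mono j := Fork.IsLimit.mono hj
  obtain ⟨l, hl⟩ := KernelFork.IsLimit.lift' hj (kernel.ι (q ≫ f) ≫ q)
    (by rw [Category.assoc, kernel.condition])
  simp only [Fork.ι_ofι] at hl
  refine ⟨⟨kernel.lift _ (pullback.fst q j) ?_, pullback.lift (kernel.ι (q ≫ f)) l hl.symm, ?_, ?_⟩⟩
  · rw [pullback.condition_assoc, w, comp_zero]
  · apply pullback.hom_ext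
    · rw [Category.assoc, pullback.lift_fst, kernel.lift_ι, Category.id_comp]
    · rw [← cancel_mono j, Category.assoc, Category.assoc, pullback.lift_snd_assoc, hl,
        kernel.lift_ι_assoc, Category.id_comp, pullback.condition]
  · rw [← cancel_mono (kernel.ι (q ≫ f)), Category.assoc, kernel.lift_ι, pullback.lift_fst,
      Category.id_comp]

theorem LenRes.step {𝒜 : C → Prop} (hadd : IsAdditiveClosed 𝒜) (hdef : DeflationClosed 𝒜)
    (hPR2 : PR2 𝒜) (r : ℕ) {X K A₀ K₁ A₁ : C} (g : X ⟶ K) (p₀ : A₀ ⟶ K) [Epi p₀]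
    (i : K₁ ⟶ A₀) (w : i ≫ p₀ = 0) (hi : IsLimit (KernelFork.ofι i w)) (p₁ : A₁ ⟶ K₁)
    (hA₁ : 𝒜 A₁) (hpb : 𝒜 (Limits.pullback g p₀)) (hX : LenRes 𝒜 (r + 1) X) :
    ∃ (X₁ : C) (g₁ : X₁ ⟶ K₁), LenRes 𝒜 r X₁ ∧ 𝒜 (Limits.pullback g₁ p₁) := by
  obtain ⟨B, b, hb, hB, hk⟩ := hX
  obtain ⟨Q, e, hQ, he⟩ := hPR2 (Limits.pullback (pullback.fst g p₀) b)
  have : Mono i := Fork.IsLimit.mono hi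
  let j : K₁ ⟶ Limits.pullback g p₀ := pullback.lift 0 i (by simp [w])
  have wj : j ≫ pullback.fst g p₀ = 0 := pullback.lift_fst _ _ _
  have hj2 : j ≫ pullback.snd g p₀ = i := pullback.lift_snd _ _ _
  have hmj : Mono j := by
    have : Mono (j ≫ pullback.snd g p₀) := by rw [hj2]; infer_instance
    exact mono_of_mono j (pullback.snd g p₀)
  have hj : IsLimit (KernelFork.ofι j wj) := KernelFork.IsLimit.ofι' j wj (fun {A} k hk => by
    have h := KernelFork.IsLimit.lift' hi (k ≫ pullback.snd g p₀)
      (by rw [Category.assoc, ← pullback.condition, reassoc_of% hk, zero_comp])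
    refine ⟨h.1, ?_⟩
    have h2 := h.2
    simp only [Fork.ι_ofι] at h2
    apply pullback.hom_ext
    · rw [Category.assoc, wj, comp_zero, hk]
    · rw [Category.assoc, hj2, h2])
  let q : Q ⟶ Limits.pullback g p₀ := e ≫ pullback.fst _ _
  let qB : Q ⟶ B := e ≫ pullback.snd _ _
  have hq : Epi q := epi_comp _ _
  have hqB : Epi qB := epi_comp _ _
  have hc : q ≫ pullback.fst g p₀ = qB ≫ b := by simp [q, qB, pullback.condition]
  obtain ⟨e₁⟩ := nonempty_pullback_iso_kernel j _ wj hj q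
  obtain ⟨e₂⟩ := nonempty_pullback_iso_kernel (kernel.ι b) b (kernel.condition b)
    (kernelIsKernel b) qB
  refine ⟨Limits.pullback q j, pullback.snd q j, ?_, ?_⟩
  · exact LenRes.iso hadd r (e₂ ≪≫ eqToIso (by rw [hc]) ≪≫ e₁.symm)
      (LenRes.pullback hadd hdef r qB (kernel.ι b) hQ hB hk)
  · exact hadd.iso (pullbackLeftPullbackSndIso q j p₁).symm
      (LenRes.pullback₀ hadd hdef q (p₁ ≫ j) hQ hpb hA₁)

theorem epi_toCycles_of_exactAt (E : CochainComplex C ℤ) (i j : ℤ) (hij : i + 1 = j)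
    (h : E.ExactAt j) : Epi (E.toCycles i j) := by
  have := (HomologicalComplex.exactAt_iff_isZero_homology E j).1 h
  exact Preadditive.epi_of_isZero_cokernel' _
    (E.homologyIsCokernel i j (by simp [← hij])) this

theorem iCycles_toCycles (E : CochainComplex C ℤ) (i j : ℤ) :
    E.iCycles i ≫ E.toCycles i j = 0 := by
  rw [← cancel_mono (E.iCycles j)]; simp

theorem nonempty_isLimit_iCycles (E : CochainComplex C ℤ) (i j : ℤ) (hij : i + 1 = j) :
    Nonempty (IsLimit (KernelFork.ofι (E.iCycles i) (iCycles_toCycles E i j))) :=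
  ⟨KernelFork.IsLimit.ofι' _ _ (fun {A} k hk =>
    ⟨E.liftCycles k j (by simp [← hij])
      (by rw [← E.toCycles_i, reassoc_of% hk, zero_comp]), by simp⟩)⟩

theorem cycles_pred {𝒜 : C → Prop} (hdef : DeflationClosed 𝒜)
    (E : CochainComplex C ℤ) (hterms : ∀ k : ℤ, 𝒜 (E.X k)) (hacy : ∀ k : ℤ, E.ExactAt k)
    (k : ℤ) (h : 𝒜 (E.cycles (k + 1))) : 𝒜 (E.cycles k) := by
  have := epi_toCycles_of_exactAt E k (k + 1) rfl (hacy _)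
  obtain ⟨hl⟩ := nonempty_isLimit_iCycles E k (k + 1) rfl
  exact mem_of_isKernel hdef _ _ _ hl (hterms k) h

theorem cycles_descend {𝒜 : C → Prop} (hdef : DeflationClosed 𝒜)
    (E : CochainComplex C ℤ) (hterms : ∀ k : ℤ, 𝒜 (E.X k)) (hacy : ∀ k : ℤ, E.ExactAt k)
    (k : ℤ) (d : ℕ) (h : 𝒜 (E.cycles (k + d))) : 𝒜 (E.cycles k) := by
  induction d with
  | zero => simpa using h
  | succ d ih =>
    apply ih
    apply cycles_pred hdef E hterms hacy
    rwa [show k + (d : ℤ) + 1 = k + ((d + 1 : ℕ) : ℤ) by push_cast; ring]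

theorem cycles_of_lenRes {𝒜 : C → Prop} (hadd : IsAdditiveClosed 𝒜) (hdef : DeflationClosed 𝒜)
    (hPR2 : PR2 𝒜)
    (E : CochainComplex C ℤ) (hterms : ∀ k : ℤ, 𝒜 (E.X k)) (hacy : ∀ k : ℤ, E.ExactAt k)
    (r : ℕ) (m : ℤ) (X : C) (g : X ⟶ E.cycles m) (hX : LenRes 𝒜 r X)
    (hpb : 𝒜 (pullback g (E.toCycles (m - 1) m))) : 𝒜 (E.cycles (m - 1 - r)) := by
  induction r generalizing m X with
  | zero =>
    have := epi_toCycles_of_exactAt E (m - 1) m (by ring) (hacy _)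
    obtain ⟨hl⟩ := nonempty_isLimit_iCycles E (m - 1) m (by ring)
    have hk : 𝒜 (kernel (pullback.fst g (E.toCycles (m - 1) m))) :=
      mem_of_isKernel hdef _ _ (kernel.condition _) (kernelIsKernel _) hpb hX
    have := isIso_kernel_map_of_isPullback
        (IsPullback.of_hasPullback g (E.toCycles (m - 1) m))
    have h2 := hadd.iso (asIso (kernel.map _ _ _ _
        (IsPullback.of_hasPullback g (E.toCycles (m - 1) m)).w)) hk
    have h3 := hadd.iso (IsLimit.conePointUniqueUpToIso (kernelIsKernel _) hl) h2
    simpa using h3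
  | succ r ih =>
    have := epi_toCycles_of_exactAt E (m - 1) m (by ring) (hacy _)
    obtain ⟨hl⟩ := nonempty_isLimit_iCycles E (m - 1) m (by ring)
    obtain ⟨X₁, g₁, h₁, h₂⟩ := LenRes.step hadd hdef hPR2 r g (E.toCycles (m - 1) m) _ _ hl
      (E.toCycles (m - 1 - 1) (m - 1)) (hterms _) hpb hX
    have := ih (m - 1) X₁ g₁ h₁ h₂
    rwa [show m - 1 - 1 - (r : ℤ) = m - 1 - ((r + 1 : ℕ) : ℤ) by push_cast; ring] at this

theorem lenRes_of_resolution {𝒜 : C → Prop} (hadd : IsAdditiveClosed 𝒜) {X : C} {n : ℕ}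
    (h : IsResolutionOfLength 𝒜 X n) : LenRes 𝒜 (n + 1) X := by
  obtain ⟨R, e, h1, h2, h3, h4⟩ := h
  have key : ∀ j : ℕ, j ≤ n + 1 → LenRes 𝒜 j (R.cycles (-(n : ℤ) + j)) := by
    intro j
    induction j with
    | zero =>
      intro _
      have hz : IsZero (R.X (-(n : ℤ) - 1)) := h2 _ (by omega)
      have := epi_toCycles_of_exactAt R (-(n : ℤ) - 1) (-(n : ℤ)) (by ring) (h4 _)
      have hz' : IsZero (R.cycles (-(n : ℤ))) := IsZero.of_epi (R.toCycles (-(n : ℤ) - 1) _) hz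
      simp only [Nat.cast_zero, add_zero]
      exact hadd.iso (hz'.isoZero).symm hadd.zero
    | succ j ih =>
      intro hj
      have hidx : -(n : ℤ) + j + 1 = -(n : ℤ) + ((j + 1 : ℕ) : ℤ) := by push_cast; ring
      rw [← hidx]
      obtain ⟨hl⟩ := nonempty_isLimit_iCycles R (-(n : ℤ) + j) _ rfl
      refine ⟨R.X (-(n : ℤ) + j), R.toCycles _ _, epi_toCycles_of_exactAt R _ _ rfl (h4 _),
        h3 _ (by omega) (by omega), ?_⟩
      exact LenRes.iso hadd j (IsLimit.conePointUniqueUpToIso (kernelIsKernel _) hl).symm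
        (ih (by omega))
  have h := key (n + 1) le_rfl
  rw [show -(n : ℤ) + ((n + 1 : ℕ) : ℤ) = 1 by push_cast; ring] at h
  have hd : R.d 1 2 = 0 := (h1 2 (by norm_num)).eq_of_tgt _ _
  have hiso : IsIso (R.iCycles 1) := R.isIso_iCycles 1 2 (by simp) hd
  exact LenRes.iso hadd _ (asIso (R.iCycles 1) ≪≫ e) h

theorem exists_lenRes {𝒜 : C → Prop} (hadd : IsAdditiveClosed 𝒜) {n : ℕ}
    (hres : resdimCat 𝒜 = (n : ℕ∞)) (X : C) : ∃ r ≤ n + 1, LenRes 𝒜 r X := by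
  have h : resdim 𝒜 X ≤ n := hres ▸ le_iSup (resdim 𝒜) X
  have hlt : resdim 𝒜 X < ((n + 1 : ℕ) : ℕ∞) :=
    lt_of_le_of_lt h (by exact_mod_cast Nat.lt_succ_self n)
  obtain ⟨_, ⟨k, rfl, hk⟩, hkn⟩ := sInf_lt_iff.1 hlt
  have : k < n + 1 := by exact_mod_cast hkn
  exact ⟨k + 1, by omega, lenRes_of_resolution hadd hk⟩

theorem cycles_mem {𝒜 : C → Prop} (hadd : IsAdditiveClosed 𝒜) (hdef : DeflationClosed 𝒜)
    (hPR2 : PR2 𝒜) {n : ℕ} (hres : resdimCat 𝒜 = (n : ℕ∞))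
    (E : CochainComplex C ℤ) (hterms : ∀ k : ℤ, 𝒜 (E.X k)) (hacy : ∀ k : ℤ, E.ExactAt k)
    (k : ℤ) : 𝒜 (E.cycles k) := by
  obtain ⟨r, hr, hX⟩ := exists_lenRes hadd hres (E.cycles (k + n + 2))
  have h := cycles_of_lenRes hadd hdef hPR2 E hterms hacy r (k + n + 2) _ (𝟙 _) hX
    (hadd.iso (asIso (pullback.snd (𝟙 _) _)).symm (hterms (k + n + 2 - 1)))
  apply cycles_descend hdef E hterms hacy k (n + 1 - r)
  rwa [show k + (n : ℤ) + 2 - 1 - r = k + ((n + 1 - r : ℕ) : ℤ) by omega] at h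

theorem image_mem {𝒜 : C → Prop} (hadd : IsAdditiveClosed 𝒜) (hdef : DeflationClosed 𝒜)
    (hPR2 : PR2 𝒜) {n : ℕ} (hres : resdimCat 𝒜 = (n : ℕ∞))
    (E : CochainComplex C ℤ) (hterms : ∀ k : ℤ, 𝒜 (E.X k)) (hacy : ∀ k : ℤ, E.ExactAt k)
    (k : ℤ) : 𝒜 (image (E.d k (k + 1))) := by
  have := epi_toCycles_of_exactAt E k (k + 1) rfl (hacy _)
  have : StrongEpi (E.toCycles k (k + 1)) := strongEpi_of_epi _
  exact hadd.iso (image.isoStrongEpiMono (E.toCycles k (k + 1)) (E.iCycles (k + 1)) (by simp))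
    (cycles_mem hadd hdef hPR2 hres E hterms hacy (k + 1))

/-- If `𝒜` is preresolving with `resdim_𝒜 (C) = n` finite and `E•` is an acyclic unbounded
cochain complex with all terms in `𝒜`, then there is a contractible cochain complex `C•`
with all terms in `𝒜` such that all images of differentials of `C• ⊞ E•` lie in `𝒜`.
In particular, `E•` is homotopy equivalent to an acyclic complex with terms in `𝒜` all of
whose images of differentials lie in `𝒜`. -/
theorem exists_contractible_summand_of_acyclic
    (𝒜 : C → Prop) (hadd : IsAdditiveClosed 𝒜)
    (hdef : DeflationClosed 𝒜) (hPR2 : PR2 𝒜)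
    (n : ℕ) (hres : resdimCat 𝒜 = (n : ℕ∞))
    (E : CochainComplex C ℤ) (hterms : ∀ k : ℤ, 𝒜 (E.X k))
    (hacy : ∀ k : ℤ, E.ExactAt k) :
    (∃ K : CochainComplex C ℤ,
        (∀ k : ℤ, 𝒜 (K.X k)) ∧ Nonempty (Homotopy (𝟙 K) 0) ∧
        (∀ k : ℤ, 𝒜 (image ((K ⊞ E).d k (k + 1))))) ∧
      (∃ A : CochainComplex C ℤ,
        (∀ k : ℤ, 𝒜 (A.X k)) ∧ (∀ k : ℤ, A.ExactAt k) ∧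
        (∀ k : ℤ, 𝒜 (image (A.d k (k + 1)))) ∧ Nonempty (HomotopyEquiv E A)) := by
  have e : E ≅ (0 : CochainComplex C ℤ) ⊞ E := isoZeroBiprod (isZero_zero _)
  refine ⟨⟨0, fun k => ?_, ⟨Homotopy.ofEq ((isZero_zero _).eq_of_src _ _)⟩, ?_⟩,
    ⟨E, hterms, hacy, image_mem hadd hdef hPR2 hres E hterms hacy, ⟨HomotopyEquiv.refl E⟩⟩⟩
  · have hz : IsZero ((0 : CochainComplex C ℤ).X k) :=
      (HomologicalComplex.eval C (ComplexShape.up ℤ) k).map_isZero (isZero_zero _)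
    exact hadd.iso hz.isoZero.symm hadd.zero
  · exact image_mem hadd hdef hPR2 hres _
      (fun k => hadd.iso ((HomologicalComplex.eval C (ComplexShape.up ℤ) k).mapIso e) (hterms k))
      (fun k => (hacy k).of_iso e)
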